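/- Fix an integer n ≥ 2, set t_k = k/n for k = 0, …, n−1, and define weights w*_0 = 6n²/(12n³ + n + 3), w*_k = 12n²/(12n³ + n + 3) for 1 ≤ k ≤ n − 2, and w*_{n-1} = 18n²/(12n³ + n + 3). Then ∑_{k=0}^{n-1} ∑_{ℓ=0}^{n-1} w*_k w*_ℓ (46/45 − t_k²/6 + t_k³/12 − t_k⁴/24 + t_k² t_ℓ/4 − t_ℓ²/6 + t_k t_ℓ²/4 − t_k² t_ℓ²/4 + t_ℓ³/12 − t_ℓ⁴/24 + |t_k − t_ℓ|³/12) = (720n⁶ + n² + 60n − 45)/(5(12n³ + n + 3)²). -/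

import Mathlib

/-- The optimal kernel cubature weights for the left-Riemann nodes `t_k = k/n`. -/
noncomputable def wstar (n k : ℕ) : ℝ :=
  if k = 0 then 6 * (n : ℝ) ^ 2 / (12 * (n : ℝ) ^ 3 + n + 3)
  else if k = n - 1 then 18 * (n : ℝ) ^ 2 / (12 * (n : ℝ) ^ 3 + n + 3)
  else 12 * (n : ℝ) ^ 2 / (12 * (n : ℝ) ^ 3 + n + 3)

/-!
The double sum is `∫ x in 0..1, g x ^ 2`, where `g x = ∑ k, w*_k K(x, k / n)`. Every `K(·, y)` is
a quadratic polynomial with leading coefficient `1 / 2` on either side of `y`, so `g` is piecewise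
quadratic with second derivative `∑ k, w*_k` off the nodes. The weights make `g` equal to `1` at
all nodes, as optimality demands because `K(·, y)` has integral `1`; moreover the derivative of
`g` vanishes at `1`. Hence `g = 1 + c (x - k / n) (x - (k + 1) / n)` between two nodes and
`g = 1 + c ((x - 1)² - 1 / n²)` after the last one, with the same `c`, and `g²` is integrated
piece by piece.
-/

open Finset intervalIntegral
open MeasureTheory (Measure volume)

theorem integral_quadratic_mul_quadratic (a b p₀ p₁ p₂ q₀ q₁ q₂ : ℝ) :
    ∫ x in a..b, (p₀ + p₁ * x + p₂ * x ^ 2) * (q₀ + q₁ * x + q₂ * x ^ 2) =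
      p₀ * q₀ * (b - a) + (p₀ * q₁ + p₁ * q₀) * ((b ^ 2 - a ^ 2) / 2) +
        (p₀ * q₂ + p₁ * q₁ + p₂ * q₀) * ((b ^ 3 - a ^ 3) / 3) +
        (p₁ * q₂ + p₂ * q₁) * ((b ^ 4 - a ^ 4) / 4) + p₂ * q₂ * ((b ^ 5 - a ^ 5) / 5) := by
  have hderiv (x : ℝ) : HasDerivAt (fun x : ℝ ↦ p₀ * q₀ * x + (p₀ * q₁ + p₁ * q₀) * (x ^ 2 / 2) +
      (p₀ * q₂ + p₁ * q₁ + p₂ * q₀) * (x ^ 3 / 3) + (p₁ * q₂ + p₂ * q₁) * (x ^ 4 / 4) +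
      p₂ * q₂ * (x ^ 5 / 5)) ((p₀ + p₁ * x + p₂ * x ^ 2) * (q₀ + q₁ * x + q₂ * x ^ 2)) x := by
    have hpow (m : ℕ) (r : ℝ) := ((hasDerivAt_pow m x).div_const (m : ℝ)).const_mul r
    convert! ((((hasDerivAt_id x).const_mul (p₀ * q₀)).add (hpow 2 (p₀ * q₁ + p₁ * q₀))).add
      (hpow 3 (p₀ * q₂ + p₁ * q₁ + p₂ * q₀))).add (hpow 4 (p₁ * q₂ + p₂ * q₁)) |>.add
      (hpow 5 (p₂ * q₂)) using 1
    norm_num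
    ring
  rw [integral_eq_sub_of_hasDerivAt (fun x _ ↦ hderiv x)
    (Continuous.intervalIntegrable (by fun_prop) a b)]
  ring

theorem integral_one_add_mul_sub_mul_sub_sq (a b c : ℝ) :
    ∫ x in a..b, (1 + c * ((x - a) * (x - b))) ^ 2 =
      (b - a) - c * (b - a) ^ 3 / 3 + c ^ 2 * (b - a) ^ 5 / 30 := by
  calc
    _ = ∫ x in a..b, (1 + c * a * b + -c * (a + b) * x + c * x ^ 2) *
          (1 + c * a * b + -c * (a + b) * x + c * x ^ 2) := by congr with x; ring
    _ = _ := by rw [integral_quadratic_mul_quadratic]; ring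

theorem integral_one_add_mul_sub_sq_sub_sq_sq (a b c : ℝ) :
    ∫ x in a..b, (1 + c * ((x - b) ^ 2 - (b - a) ^ 2)) ^ 2 =
      (b - a) - 4 * c * (b - a) ^ 3 / 3 + 8 * c ^ 2 * (b - a) ^ 5 / 15 := by
  calc
    _ = ∫ x in a..b, (1 + c * (b ^ 2 - (b - a) ^ 2) + -2 * c * b * x + c * x ^ 2) *
          (1 + c * (b ^ 2 - (b - a) ^ 2) + -2 * c * b * x + c * x ^ 2) := by congr with x; ring
    _ = _ := by rw [integral_quadratic_mul_quadratic]; ring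

theorem sum_sum_mul_integral_mul {ι : Type*} (s : Finset ι) (w : ι → ℝ) {f : ι → ℝ → ℝ} {a b : ℝ}
    {μ : Measure ℝ}
    (hf : ∀ i ∈ s, ∀ j ∈ s, IntervalIntegrable (fun x ↦ f i x * f j x) μ a b) :
    ∑ i ∈ s, ∑ j ∈ s, w i * w j * ∫ x in a..b, f i x * f j x ∂μ =
      ∫ x in a..b, (∑ i ∈ s, w i * f i x) ^ 2 ∂μ := by
  have hint (i) (hi : i ∈ s) (j) (hj : j ∈ s) :
      IntervalIntegrable (fun x ↦ w i * w j * (f i x * f j x)) μ a b :=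
    (hf i hi j hj).const_mul _
  calc
    _ = ∑ i ∈ s, ∫ x in a..b, ∑ j ∈ s, w i * w j * (f i x * f j x) ∂μ := by
      refine sum_congr rfl fun i hi ↦ ?_
      simp only [integral_finsetSum (hint i hi), integral_const_mul]
    _ = ∫ x in a..b, ∑ i ∈ s, ∑ j ∈ s, w i * w j * (f i x * f j x) ∂μ :=
      (integral_finsetSum fun i hi ↦ by
        simpa only [sum_fn] using IntervalIntegrable.sum s (hint i hi)).symm
    _ = _ := by simp only [sq, sum_mul_sum, mul_mul_mul_comm]

theorem sum_range_natCast_sq (n : ℕ) :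
    ∑ k ∈ range n, (k : ℝ) ^ 2 = n * (n - 1) * (2 * n - 1) / 6 := by
  induction n with
  | zero => simp
  | succ n ih => rw [sum_range_succ, ih]; push_cast; ring

theorem sum_range_max_natCast {j n : ℕ} {y : ℝ} (hj : j < n) (hy : y ∈ Set.Icc (j : ℝ) (j + 1)) :
    ∑ k ∈ range n, max y k = (j + 1) * y + (n * (n - 1) - j * (j + 1) : ℝ) / 2 := by
  induction n, hj using Nat.le_induction with
  | base =>
    have hmax (k) (hk : k ∈ range (j + 1)) : max y (k : ℝ) = y :=
      max_eq_left <| (Nat.cast_le.2 (mem_range_succ_iff.1 hk)).trans hy.1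
    rw [sum_congr rfl hmax, sum_const, card_range, nsmul_eq_mul]
    push_cast
    ring
  | succ n hn ih =>
    have hyn : y ≤ n := hy.2.trans (by exact_mod_cast hn)
    rw [sum_range_succ, ih, max_eq_right hyn]
    push_cast
    ring

/-- The reproducing kernel `K` of the first-order unweighted Sobolev space on `[0, 1]`. -/
noncomputable def sobolevKernel (x y : ℝ) : ℝ :=
  1 + (x - 1 / 2) * (y - 1 / 2) + (|x - y| ^ 2 - |x - y| + 1 / 6) / 2

theorem continuous_sobolevKernel_left (y : ℝ) : Continuous fun x ↦ sobolevKernel x y := by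
  unfold sobolevKernel
  fun_prop

theorem sobolevKernel_eq_sub_max (x y : ℝ) :
    sobolevKernel x y = 4 / 3 + x ^ 2 / 2 + y ^ 2 / 2 - max x y := by
  have hmax : max x y = 2⁻¹ * (x + y + |y - x|) := sup_eq_half_smul_add_add_abs_sub' ℝ x y
  rw [sobolevKernel, sq_abs, hmax, abs_sub_comm y x]
  ring

-- The coefficients are written in the form that `integral_quadratic_mul_quadratic` matches.
theorem sobolevKernel_of_le {x y : ℝ} (h : x ≤ y) :
    sobolevKernel x y = 4 / 3 + y ^ 2 / 2 - y + 0 * x + 1 / 2 * x ^ 2 := by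
  rw [sobolevKernel_eq_sub_max, max_eq_right h]
  ring

theorem sobolevKernel_of_ge {x y : ℝ} (h : y ≤ x) :
    sobolevKernel x y = 4 / 3 + y ^ 2 / 2 + -1 * x + 1 / 2 * x ^ 2 := by
  rw [sobolevKernel_eq_sub_max, max_eq_left h]
  ring

theorem integral_sobolevKernel_mul {s t : ℝ} (hs : s ∈ Set.Icc 0 1) (ht : t ∈ Set.Icc 0 1) :
    ∫ x in 0..1, sobolevKernel x s * sobolevKernel x t =
      46/45 - s ^ 2 / 6 + s ^ 3 / 12 - s ^ 4 / 24 + s ^ 2 * t / 4 - t ^ 2 / 6 + s * t ^ 2 / 4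
        - s ^ 2 * t ^ 2 / 4 + t ^ 3 / 12 - t ^ 4 / 24 + |s - t| ^ 3 / 12 := by
  wlog hst : s ≤ t generalizing s t
  · simp only [mul_comm (sobolevKernel _ s), this ht hs (le_of_not_ge hst), abs_sub_comm s t]
    ring
  have hint (a b : ℝ) : IntervalIntegrable (fun x ↦ sobolevKernel x s * sobolevKernel x t)
      volume a b :=
    ((continuous_sobolevKernel_left s).mul (continuous_sobolevKernel_left t)).intervalIntegrable a b
  have hleft := integral_congr (μ := volume) fun x hx ↦
    have hxs : x ∈ Set.Icc 0 s := Set.uIcc_of_le hs.1 ▸ hx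
    congrArg₂ (· * ·) (sobolevKernel_of_le hxs.2) (sobolevKernel_of_le (hxs.2.trans hst))
  have hmid := integral_congr (μ := volume) fun x hx ↦
    have hxst : x ∈ Set.Icc s t := Set.uIcc_of_le hst ▸ hx
    congrArg₂ (· * ·) (sobolevKernel_of_ge hxst.1) (sobolevKernel_of_le hxst.2)
  have hright := integral_congr (μ := volume) fun x hx ↦
    have hxt : x ∈ Set.Icc t 1 := Set.uIcc_of_le ht.2 ▸ hx
    congrArg₂ (· * ·) (sobolevKernel_of_ge (hst.trans hxt.1)) (sobolevKernel_of_ge hxt.1)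
  rw [← integral_add_adjacent_intervals (hint 0 s) (hint s 1),
    ← integral_add_adjacent_intervals (hint s t) (hint t 1), hleft, hmid, hright,
    abs_of_nonpos (sub_nonpos.2 hst)]
  simp only [integral_quadratic_mul_quadratic]
  ring

theorem sum_sobolevKernel_node {j n : ℕ} {x : ℝ} (hj : j < n)
    (hx : x ∈ Set.Icc ((j : ℝ) / n) ((j + 1) / n)) :
    ∑ k ∈ range n, sobolevKernel x (k / n) =
      n * (4 / 3 + x ^ 2 / 2) + (n - 1 : ℝ) * (2 * n - 1) / (12 * n) - (j + 1) * x
        - (n * (n - 1) - j * (j + 1) : ℝ) / (2 * n) := by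
  have hn : (0 : ℝ) < n := by exact_mod_cast j.zero_le.trans_lt hj
  have hmax (k : ℕ) : max x ((k : ℝ) / n) = max (n * x) k / n := by
    rw [← max_div_div_right hn.le, mul_div_cancel_left₀ x hn.ne']
  have hnx : n * x ∈ Set.Icc (j : ℝ) (j + 1) :=
    ⟨(div_le_iff₀' hn).1 hx.1, (le_div_iff₀' hn).1 hx.2⟩
  simp only [sobolevKernel_eq_sub_max, hmax, div_pow, sum_sub_distrib, sum_add_distrib, ← sum_div,
    sum_range_natCast_sq, sum_range_max_natCast hj hnx, sum_const, card_range, nsmul_eq_mul]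
  field_simp
  ring

/-- The common value of the weights `wstar n k` for `0 < k < n - 1`; the first and the last weight
are `1 / 2` and `3 / 2` times as large. -/
noncomputable def interiorWeight (n : ℕ) : ℝ :=
  12 * (n : ℝ) ^ 2 / (12 * (n : ℝ) ^ 3 + n + 3)

-- The left-hand side is the value of `cubatureRepresenter n` at every node.
theorem interiorWeight_normalization {n : ℕ} (hn : n ≠ 0) :
    interiorWeight n * (n + 1 / (12 * n) + 1 / (4 * (n : ℝ) ^ 2)) = 1 := by
  have _ : 12 * (n : ℝ) ^ 3 + n + 3 ≠ 0 := by positivity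
  rw [interiorWeight]
  field_simp
  ring

theorem wstar_eq_interiorWeight_mul {n : ℕ} (hn : 2 ≤ n) (k : ℕ) :
    wstar n k = interiorWeight n *
      (1 - (if k = 0 then 1 / 2 else 0) + (if k = n - 1 then 1 / 2 else 0)) := by
  unfold wstar interiorWeight
  split_ifs <;> first | omega | ring

theorem sum_wstar_mul {n : ℕ} (hn : 2 ≤ n) (f : ℕ → ℝ) :
    ∑ k ∈ range n, wstar n k * f k =
      interiorWeight n * (∑ k ∈ range n, f k - f 0 / 2 + f (n - 1) / 2) := by
  have h0 : 0 ∈ range n := mem_range.2 (by omega)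
  have hlast : n - 1 ∈ range n := mem_range.2 (by omega)
  simp only [wstar_eq_interiorWeight_mul hn, mul_assoc, ← mul_sum, add_mul, sub_mul, one_mul,
    sum_add_distrib, sum_sub_distrib, ite_mul, zero_mul, sum_ite_eq', if_pos h0, if_pos hlast]
  ring

/-- The function `∑ k, w*_k K(·, t_k)`, which represents the cubature rule in the Sobolev space. -/
noncomputable def cubatureRepresenter (n : ℕ) (x : ℝ) : ℝ :=
  ∑ k ∈ range n, wstar n k * sobolevKernel x (k / n)

theorem continuous_cubatureRepresenter (n : ℕ) : Continuous (cubatureRepresenter n) :=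
  continuous_finsetSum _ fun k _ ↦ (continuous_sobolevKernel_left (k / n)).const_mul (wstar n k)

theorem cubatureRepresenter_between_nodes {j n : ℕ} {x : ℝ} (hj : j + 1 < n)
    (hx : x ∈ Set.Icc ((j : ℝ) / n) ((j + 1) / n)) :
    cubatureRepresenter n x =
      1 + n * interiorWeight n / 2 * ((x - j / n) * (x - (j + 1) / n)) := by
  have hn : (0 : ℝ) < n := by exact_mod_cast (j + 1).zero_le.trans_lt hj
  have hx0 : 0 ≤ x := le_trans (by positivity) hx.1
  have hxlast : x ≤ ((n - 1 : ℕ) : ℝ) / n := by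
    refine hx.2.trans (div_le_div_of_nonneg_right ?_ hn.le)
    exact_mod_cast Nat.le_sub_one_of_lt hj
  calc
    _ = interiorWeight n * (n + 1 / (12 * n) + 1 / (4 * (n : ℝ) ^ 2)) +
          n * interiorWeight n / 2 * ((x - j / n) * (x - (j + 1) / n)) := by
      rw [cubatureRepresenter, sum_wstar_mul (by omega), sum_sobolevKernel_node (by omega) hx,
        sobolevKernel_of_ge (by simpa using hx0), sobolevKernel_of_le hxlast,
        Nat.cast_pred (by omega)]
      push_cast
      field_simp
      ring
    _ = _ := by rw [interiorWeight_normalization (by omega)]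

theorem cubatureRepresenter_after_last_node {n : ℕ} {x : ℝ} (hn : 2 ≤ n)
    (hx : x ∈ Set.Icc (((n - 1 : ℕ) : ℝ) / n) 1) :
    cubatureRepresenter n x =
      1 + n * interiorWeight n / 2 * ((x - 1) ^ 2 - (1 / n) ^ 2) := by
  have hn0 : (n : ℝ) ≠ 0 := by positivity
  have hx0 : 0 ≤ x := le_trans (by positivity) hx.1
  have hx' : x ∈ Set.Icc (((n - 1 : ℕ) : ℝ) / n) (((n - 1 : ℕ) + 1) / n) := by
    rwa [Nat.cast_pred (by omega), sub_add_cancel, div_self hn0, ← Nat.cast_pred (by omega)]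
  calc
    _ = interiorWeight n * (n + 1 / (12 * n) + 1 / (4 * (n : ℝ) ^ 2)) +
          n * interiorWeight n / 2 * ((x - 1) ^ 2 - (1 / n) ^ 2) := by
      rw [cubatureRepresenter, sum_wstar_mul hn, sum_sobolevKernel_node (by omega) hx',
        sobolevKernel_of_ge (by simpa using hx0), sobolevKernel_of_ge hx.1,
        Nat.cast_pred (by omega)]
      push_cast
      field_simp
      ring
    _ = _ := by rw [interiorWeight_normalization (by omega)]

theorem integral_cubatureRepresenter_sq_between_nodes {j n : ℕ} (hj : j + 1 < n) :
    ∫ x in (j / n : ℝ)..((j + 1 : ℕ) / n : ℝ), cubatureRepresenter n x ^ 2 =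
      1 / n - interiorWeight n / (6 * n ^ 2) + interiorWeight n ^ 2 / (120 * n ^ 3) := by
  have hn : (n : ℝ) ≠ 0 := by exact_mod_cast (by omega : n ≠ 0)
  have hle : (j : ℝ) / n ≤ (j + 1) / n := by gcongr; linarith
  push_cast
  rw [integral_congr fun x hx ↦ congrArg (· ^ 2) <|
      cubatureRepresenter_between_nodes hj (Set.uIcc_of_le hle ▸ hx),
    integral_one_add_mul_sub_mul_sub_sq]
  field_simp
  ring

theorem integral_cubatureRepresenter_sq_after_last_node {n : ℕ} (hn : 2 ≤ n) :
    ∫ x in ((n - 1 : ℕ) / n : ℝ)..1, cubatureRepresenter n x ^ 2 =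
      1 / n - 2 * interiorWeight n / (3 * n ^ 2) + 2 * interiorWeight n ^ 2 / (15 * n ^ 3) := by
  have hn0 : (n : ℝ) ≠ 0 := by positivity
  have hle : ((n - 1 : ℕ) : ℝ) / n ≤ 1 :=
    div_le_one_of_le₀ (by exact_mod_cast n.sub_le 1) n.cast_nonneg
  have hlen : 1 / (n : ℝ) = 1 - ((n - 1 : ℕ) : ℝ) / n := by
    rw [Nat.cast_pred (by omega), sub_div, div_self hn0, sub_sub_cancel]
  rw [integral_congr fun x hx ↦ congrArg (· ^ 2) <|
      cubatureRepresenter_after_last_node hn (Set.uIcc_of_le hle ▸ hx),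
    hlen, integral_one_add_mul_sub_sq_sub_sq_sq, ← hlen]
  field_simp
  ring

theorem integral_cubatureRepresenter_sq {n : ℕ} (hn : 2 ≤ n) :
    ∫ x in 0..1, cubatureRepresenter n x ^ 2 =
      (720 * (n : ℝ) ^ 6 + n ^ 2 + 60 * n - 45) / (5 * (12 * (n : ℝ) ^ 3 + n + 3) ^ 2) := by
  have hint (a b : ℝ) : IntervalIntegrable (fun x ↦ cubatureRepresenter n x ^ 2) volume a b :=
    ((continuous_cubatureRepresenter n).pow 2).intervalIntegrable a b
  have hnodes : ∫ x in 0..((n - 1 : ℕ) / n : ℝ), cubatureRepresenter n x ^ 2 =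
      (n - 1) *
        (1 / n - interiorWeight n / (6 * n ^ 2) + interiorWeight n ^ 2 / (120 * n ^ 3)) := by
    have hsum := sum_integral_adjacent_intervals (a := fun j : ℕ ↦ (j : ℝ) / n) (n := n - 1)
      fun j _ ↦ hint (j / n) ((j + 1 : ℕ) / n)
    rw [sum_congr rfl fun j hj ↦ integral_cubatureRepresenter_sq_between_nodes
      (Nat.add_lt_of_lt_sub (mem_range.1 hj)), sum_const, card_range, nsmul_eq_mul,
      Nat.cast_zero, zero_div] at hsum
    rw [← hsum, Nat.cast_pred (by omega)]
  have _ : 12 * (n : ℝ) ^ 3 + n + 3 ≠ 0 := by positivity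
  rw [← integral_add_adjacent_intervals (hint 0 ((n - 1 : ℕ) / n)) (hint _ 1), hnodes,
    integral_cubatureRepresenter_sq_after_last_node hn, interiorWeight]
  field_simp
  ring

/-- The double-sum identity from the proof of Lemma 2, where the bracketed
expression equals `∫_0^1 K(x, t_k) K(x, t_ℓ) dx` for `t_k = k/n`. -/
theorem stmt_14 (n : ℕ) (hn : 2 ≤ n) :
    (∑ k ∈ Finset.range n, ∑ l ∈ Finset.range n,
        wstar n k * wstar n l *
          (46/45 - ((k : ℝ)/n) ^ 2 / 6 + ((k : ℝ)/n) ^ 3 / 12 - ((k : ℝ)/n) ^ 4 / 24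
            + ((k : ℝ)/n) ^ 2 * ((l : ℝ)/n) / 4 - ((l : ℝ)/n) ^ 2 / 6
            + ((k : ℝ)/n) * ((l : ℝ)/n) ^ 2 / 4 - ((k : ℝ)/n) ^ 2 * ((l : ℝ)/n) ^ 2 / 4
            + ((l : ℝ)/n) ^ 3 / 12 - ((l : ℝ)/n) ^ 4 / 24
            + |(k : ℝ)/n - (l : ℝ)/n| ^ 3 / 12))
      = (720 * (n : ℝ) ^ 6 + (n : ℝ) ^ 2 + 60 * n - 45)
          / (5 * (12 * (n : ℝ) ^ 3 + n + 3) ^ 2) := by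
  have hnode (k) (hk : k ∈ range n) : (k : ℝ) / n ∈ Set.Icc 0 1 :=
    ⟨by positivity, div_le_one_of_le₀ (Nat.cast_le.2 (mem_range.1 hk).le) n.cast_nonneg⟩
  have hint (k) (_ : k ∈ range n) (l) (_ : l ∈ range n) : IntervalIntegrable
      (fun x ↦ sobolevKernel x (k / n) * sobolevKernel x (l / n)) volume 0 1 :=
    ((continuous_sobolevKernel_left _).mul (continuous_sobolevKernel_left _)).intervalIntegrable 0 1
  calc
    _ = ∑ k ∈ range n, ∑ l ∈ range n, wstar n k * wstar n l *
          ∫ x in 0..1, sobolevKernel x (k / n) * sobolevKernel x (l / n) :=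
      sum_congr rfl fun k hk ↦ sum_congr rfl fun l hl ↦ by
        rw [integral_sobolevKernel_mul (hnode k hk) (hnode l hl)]
    _ = ∫ x in 0..1, cubatureRepresenter n x ^ 2 := sum_sum_mul_integral_mul _ _ hint
    _ = _ := integral_cubatureRepresenter_sq hn
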